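/- Define g(x) = x^{-1/2} (1 + log(2/x))^{-4} sin(1/x) for 0 < x < 1. Then the double integral ∫_0^1 ∫_0^1 [g(x) - g(y)]² · |x-y|^{-1} · (log|log(1/|x-y|)|)² dx dy is finite. -/

import Mathlib

open MeasureTheory Set

noncomputable def psiW (t : ℝ) : ℝ := (t * (1 - Real.log t) ^ 2)⁻¹

noncomputable def ampA (x : ℝ) : ℝ := (Real.sqrt x)⁻¹ * ((1 + Real.log (2 / x)) ^ 4)⁻¹

lemma keyLog {r : ℝ} (hr : 1 ≤ r) : (1 + Real.log r) ^ 8 ≤ 8 ^ 8 * r := by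
  have h0 : 0 < r := by linarith
  set s := r ^ ((1:ℝ)/8) with hs
  have hs0 : 0 < s := Real.rpow_pos_of_pos h0 _
  have hs8 : s ^ 8 = r := by
    rw [hs, ← Real.rpow_natCast, ← Real.rpow_mul h0.le]; norm_num
  have hl : Real.log r = 8 * Real.log s := by
    rw [← hs8, Real.log_pow]; norm_num
  have h1 : Real.log s ≤ s - 1 := Real.log_le_sub_one_of_pos hs0
  have h2 : 0 ≤ Real.log r := Real.log_nonneg hr
  calc (1 + Real.log r) ^ 8 ≤ (8 * s) ^ 8 := by
        apply pow_le_pow_left₀ (by linarith); linarith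
    _ = 8 ^ 8 * r := by rw [mul_pow, hs8]

lemma keyLog3 {r : ℝ} (hr : 1 ≤ r) : (1 + Real.log r) ^ 3 ≤ 8 ^ 8 * r :=
  le_trans (pow_le_pow_right₀ (by linarith [Real.log_nonneg hr]) (by norm_num)) (keyLog hr)

lemma keyLog4 {r : ℝ} (hr : 1 ≤ r) : (1 + Real.log r) ^ 4 ≤ 4096 * Real.sqrt r := by
  refine (pow_le_pow_iff_left₀ (by positivity) (by positivity) two_ne_zero).1 ?_
  rw [mul_pow, Real.sq_sqrt (by linarith), ← pow_mul]
  have := keyLog hr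
  norm_num at this ⊢
  linarith

lemma one_le_M {t : ℝ} (h0 : 0 < t) (h1 : t < 1) : 1 ≤ 1 - Real.log t := by
  linarith [Real.log_nonpos h0.le h1.le]

lemma psiW_nonneg {t : ℝ} (h0 : 0 < t) : 0 ≤ psiW t := by
  unfold psiW; positivity

lemma L_eq {x : ℝ} (h0 : 0 < x) : 1 + Real.log (2 / x) = 1 - Real.log x + Real.log 2 := by
  rw [Real.log_div (by norm_num) h0.ne']; ring

lemma log2pos : 0 < Real.log 2 := Real.log_pos (by norm_num)

lemma M_le_L {x : ℝ} (h0 : 0 < x) : 1 - Real.log x ≤ 1 + Real.log (2 / x) := by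
  rw [L_eq h0]; linarith [log2pos]

lemma ampA_nonneg {x : ℝ} : 0 ≤ ampA x := by
  unfold ampA; positivity

lemma ampA_le {x y : ℝ} (hx : 0 < x) (hxy : x ≤ y) (hy : y < 1) : ampA y ≤ 4096 * ampA x := by
  have hy0 : 0 < y := by linarith
  have hr : 1 ≤ y / x := by rw [le_div_iff₀ hx]; linarith
  have h1 := keyLog4 hr
  have hlr := Real.log_nonneg hr
  have hLx : 1 ≤ 1 + Real.log (2 / x) := (one_le_M hx (by linarith)).trans (M_le_L hx)
  have hLy : 1 ≤ 1 + Real.log (2 / y) := (one_le_M hy0 hy).trans (M_le_L hy0)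
  have hL : 1 + Real.log (2 / x) ≤ (1 + Real.log (2 / y)) * (1 + Real.log (y / x)) := by
    have : 1 + Real.log (2 / x) = 1 + Real.log (2 / y) + Real.log (y / x) := by
      rw [L_eq hx, L_eq hy0, Real.log_div hy0.ne' hx.ne']; ring
    rw [this]; nlinarith
  unfold ampA
  set P := 1 + Real.log (2 / x)
  set Q := 1 + Real.log (2 / y)
  have h4 : P ^ 4 ≤ Q ^ 4 * (4096 * Real.sqrt (y / x)) := by
    calc P ^ 4 ≤ (Q * (1 + Real.log (y / x))) ^ 4 := pow_le_pow_left₀ (by linarith) hL 4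
      _ = Q ^ 4 * (1 + Real.log (y / x)) ^ 4 := by ring
      _ ≤ _ := by gcongr
  have hsx : 0 < Real.sqrt x := Real.sqrt_pos.2 hx
  have hsy : 0 < Real.sqrt y := Real.sqrt_pos.2 hy0
  rw [Real.sqrt_div hy0.le] at h4
  have h5 : P ^ 4 * Real.sqrt x ≤ 4096 * (Q ^ 4 * Real.sqrt y) := by
    calc P ^ 4 * Real.sqrt x ≤ Q ^ 4 * (4096 * (Real.sqrt y / Real.sqrt x)) * Real.sqrt x := by gcongr
      _ = _ := by field_simp
  have hP : 0 < P := by linarith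
  have hQ : 0 < Q := by linarith
  rw [← mul_inv, ← mul_inv, ← div_eq_mul_inv, inv_eq_one_div, div_le_div_iff₀ (by positivity) (by positivity)]
  linarith

lemma deriv_bound {t : ℝ} (h0 : 0 < t) (h1 : t < 1) :
    ∃ g', HasDerivAt (fun x => ampA x * Real.sin (1 / x)) g' t ∧ |g'| ≤ 6 * (ampA t / t ^ 2) := by
  have hL : 1 ≤ 1 + Real.log (2 / t) := (one_le_M h0 h1).trans (M_le_L h0)
  have hst : 0 < Real.sqrt t := Real.sqrt_pos.2 h0
  have d1 : HasDerivAt (fun x => (Real.sqrt x)⁻¹) (-(1 / (2 * Real.sqrt t)) / (Real.sqrt t) ^ 2) t :=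
    (Real.hasDerivAt_sqrt h0.ne').fun_inv hst.ne'
  have d2a : HasDerivAt (fun x : ℝ => 2 / x) (-2 / t ^ 2) t := by
    have := (hasDerivAt_inv h0.ne').const_mul 2
    have h2 : HasDerivAt (fun x : ℝ => 2 / x) (2 * -(t ^ 2)⁻¹) t := by
      simp only [div_eq_mul_inv]; exact this
    exact h2.congr_deriv (by ring)
  have d2 : HasDerivAt (fun x => 1 + Real.log (2 / x)) (-2 / t ^ 2 / (2 / t)) t :=
    (d2a.log (by positivity)).const_add 1
  have d3 := (d2.fun_pow 4).fun_inv (by positivity)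
  have d4a : HasDerivAt (fun x : ℝ => 1 / x) (-1 / t ^ 2) t := by
    have h2 : HasDerivAt (fun x : ℝ => 1 / x) (-(t ^ 2)⁻¹) t := by
      simp only [one_div]; exact hasDerivAt_inv h0.ne'
    exact h2.congr_deriv (by ring)
  have d4 := d4a.sin
  have d := (d1.fun_mul d3).fun_mul d4
  refine ⟨_, d, ?_⟩
  have hA : 0 ≤ ampA t := ampA_nonneg
  have hsq : Real.sqrt t ^ 2 = t := Real.sq_sqrt h0.le
  have e : ∀ S Cc : ℝ, (-(1 / (2 * Real.sqrt t)) / (Real.sqrt t) ^ 2 * ((1 + Real.log (2 / t)) ^ 4)⁻¹ +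
      (Real.sqrt t)⁻¹ * (-((4:ℕ) * (1 + Real.log (2 / t)) ^ (4-1) * (-2 / t ^ 2 / (2 / t))) /
        ((1 + Real.log (2 / t)) ^ 4) ^ 2)) * S +
      (Real.sqrt t)⁻¹ * ((1 + Real.log (2 / t)) ^ 4)⁻¹ * (Cc * (-1 / t ^ 2)) =
      ampA t / t ^ 2 * (t * (4 / (1 + Real.log (2 / t)) - 1 / 2) * S - Cc) := by
    intro S Cc
    unfold ampA
    rw [hsq]
    have : (1 + Real.log (2 / t)) ≠ 0 := by linarith
    generalize 1 + Real.log (2 / t) = L at *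
    field_simp
    norm_num
    ring
  rw [e, abs_mul, abs_of_nonneg (by positivity : 0 ≤ ampA t / t ^ 2), mul_comm]
  gcongr
  have hs := Real.abs_sin_le_one (1 / t)
  have hc := Real.abs_cos_le_one (1 / t)
  have hq : |4 / (1 + Real.log (2 / t)) - 1 / 2| ≤ 4 := by
    have a1 : 4 / (1 + Real.log (2 / t)) ≤ 4 := div_le_self (by norm_num) hL
    have a2 : 0 ≤ 4 / (1 + Real.log (2 / t)) := by positivity
    rw [abs_le]; constructor <;> linarith
  calc _ ≤ |t * (4 / (1 + Real.log (2 / t)) - 1 / 2) * Real.sin (1 / t)| + |Real.cos (1 / t)| := abs_sub _ _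
    _ = t * |4 / (1 + Real.log (2 / t)) - 1 / 2| * |Real.sin (1 / t)| + |Real.cos (1 / t)| := by
      rw [abs_mul, abs_mul, abs_of_pos h0]
    _ ≤ 1 * 4 * 1 + 1 := by gcongr
    _ ≤ 6 := by norm_num

lemma diff_bound {x y : ℝ} (hx : 0 < x) (hxy : x < y) (hy : y < 1) :
    |ampA y * Real.sin (1 / y) - ampA x * Real.sin (1 / x)| ≤
      24576 * ampA x * min 1 ((y - x) / x ^ 2) := by
  have hA : 0 ≤ ampA x := ampA_nonneg
  rw [mul_min_of_nonneg _ _ (by positivity)]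
  apply le_min
  · have h1 := ampA_le hx hxy.le hy
    have hb : ∀ z, |ampA z * Real.sin (1 / z)| ≤ ampA z := fun z => by
      rw [abs_mul, abs_of_nonneg ampA_nonneg]
      exact mul_le_of_le_one_right ampA_nonneg (Real.abs_sin_le_one _)
    calc _ ≤ |ampA y * Real.sin (1 / y)| + |ampA x * Real.sin (1 / x)| := abs_sub _ _
      _ ≤ ampA y + ampA x := add_le_add (hb _) (hb _)
      _ ≤ _ := by linarith
  · have hd : ∀ t ∈ Icc x y, ∃ g', HasDerivAt (fun x => ampA x * Real.sin (1 / x)) g' t ∧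
        |g'| ≤ 6 * (ampA t / t ^ 2) := fun t ht =>
      deriv_bound (by linarith [ht.1]) (by linarith [ht.2])
    have := Convex.norm_image_sub_le_of_norm_deriv_le (f := fun x => ampA x * Real.sin (1 / x))
      (C := 24576 * ampA x / x ^ 2) (s := Icc x y) (x := x) (y := y)
      (fun t ht => (hd t ht).choose_spec.1.differentiableAt)
      (fun t ht => by
        rw [(hd t ht).choose_spec.1.deriv, Real.norm_eq_abs]
        refine (hd t ht).choose_spec.2.trans ?_
        have h1 := ampA_le hx ht.1 (by linarith [ht.2])
        have h2 : ampA t / t ^ 2 ≤ 4096 * ampA x / x ^ 2 := by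
          have := ht.1
          gcongr
        calc _ ≤ 6 * (4096 * ampA x / x ^ 2) := by gcongr
          _ = _ := by ring)
      (convex_Icc x y) (by simp [hxy.le]) (by simp [hxy.le])
    rw [Real.norm_eq_abs, Real.norm_eq_abs, abs_of_pos (by linarith : 0 < y - x)] at this
    refine this.trans (le_of_eq ?_)
    ring

lemma min_bound {x d : ℝ} (hx : 0 < x) (hx1 : x < 1) (hd : 0 < d) (hd1 : d < 1) :
    min 1 (d / x ^ 2) * (1 - Real.log d) ^ 3 ≤ 8 ^ 9 * (1 + Real.log (2 / x)) ^ 3 := by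
  have hM := one_le_M hd hd1
  have hMx := one_le_M hx hx1
  have hL := M_le_L hx
  set L := 1 + Real.log (2 / x)
  have hL0 : 0 < L := by linarith
  rcases le_total (x ^ 2) d with h | h
  · have h1 : Real.log (x ^ 2) ≤ Real.log d := Real.log_le_log (by positivity) h
    rw [Real.log_pow] at h1
    push_cast at h1
    have h2 : 1 - Real.log d ≤ 2 * L := by linarith
    calc _ ≤ 1 * (2 * L) ^ 3 := by
          gcongr
          · exact min_le_left _ _
      _ ≤ _ := by rw [mul_pow]; nlinarith [pow_pos hL0 3]
  · have hr : 1 ≤ x ^ 2 / d := by rw [le_div_iff₀ hd]; linarith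
    have h3 := keyLog3 hr
    have hlr := Real.log_nonneg hr
    have h2 : 1 - Real.log d ≤ 2 * L * (1 + Real.log (x ^ 2 / d)) := by
      have : Real.log d = 2 * Real.log x - Real.log (x ^ 2 / d) := by
        rw [Real.log_div (by positivity) hd.ne', Real.log_pow]; push_cast; ring
      nlinarith
    calc _ ≤ (d / x ^ 2) * (2 * L * (1 + Real.log (x ^ 2 / d))) ^ 3 := by
          gcongr
          · exact min_le_right _ _
      _ = (d / x ^ 2) * (8 * L ^ 3) * (1 + Real.log (x ^ 2 / d)) ^ 3 := by ring
      _ ≤ (d / x ^ 2) * (8 * L ^ 3) * (8 ^ 8 * (x ^ 2 / d)) := by gcongr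
      _ = _ := by field_simp

lemma W_bound {d : ℝ} (hd : 0 < d) (hd1 : d < 1) :
    (Real.log |Real.log (1 / d)|) ^ 2 ≤ 8 ^ 8 * ((1 - Real.log d) + psiW (1 - d)) := by
  have hM := one_le_M hd hd1
  have hu : 0 < 1 - d := by linarith
  have hpsi := psiW_nonneg hu
  have hut : 1 - d ≤ -Real.log d := by linarith [Real.log_le_sub_one_of_pos hd]
  have ht0 : 0 < -Real.log d := by linarith
  have e : |Real.log (1 / d)| = -Real.log d := by
    rw [one_div, Real.log_inv, abs_of_pos ht0]
  rw [e]
  set t := -Real.log d with htdef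
  rcases le_total 1 t with h | h
  · have h1 := keyLog h
    have h2 := Real.log_nonneg h
    have h3 : Real.log t ^ 2 ≤ (1 + Real.log t) ^ 8 :=
      calc Real.log t ^ 2 ≤ (1 + Real.log t) ^ 2 := by gcongr; linarith
        _ ≤ _ := pow_le_pow_right₀ (by linarith) (by norm_num)
    nlinarith
  · have hl : Real.log (1 - d) ≤ Real.log t := Real.log_le_log hu hut
    have hl0 : Real.log t ≤ 0 := Real.log_nonpos ht0.le h
    have hMu := one_le_M hu (by linarith)
    have h1 := keyLog (r := 1 / (1 - d)) (by rw [le_div_iff₀ hu]; linarith)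
    rw [one_div, Real.log_inv, ← sub_eq_add_neg] at h1
    have h2 : Real.log t ^ 2 ≤ (1 - Real.log (1 - d)) ^ 2 := by nlinarith
    have h3 : (1 - Real.log (1 - d)) ^ 2 ≤ 8 ^ 8 * psiW (1 - d) := by
      unfold psiW
      set m := 1 - Real.log (1 - d)
      have : m ^ 4 ≤ 8 ^ 8 * (1 - d)⁻¹ := (pow_le_pow_right₀ hMu (by norm_num)).trans h1
      rw [mul_inv, ← mul_assoc, ← div_eq_mul_inv, le_div_iff₀ (by positivity)]
      calc _ = m ^ 4 := by ring
        _ ≤ _ := this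
    nlinarith

lemma AL_bound {x : ℝ} (hx : 0 < x) (hx1 : x < 1) :
    ampA x ^ 2 * (1 + Real.log (2 / x)) ^ 3 ≤ psiW x := by
  have hMx := one_le_M hx hx1
  have hL := M_le_L hx
  unfold ampA psiW
  set L := 1 + Real.log (2 / x)
  have hL0 : 0 < L := by linarith
  rw [mul_pow, inv_pow, Real.sq_sqrt hx.le]
  have e : x⁻¹ * ((L ^ 4)⁻¹) ^ 2 * L ^ 3 = (x * L ^ 5)⁻¹ := by field_simp
  rw [e]
  gcongr
  calc _ ≤ L ^ 2 := by gcongr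
    _ ≤ _ := pow_le_pow_right₀ (by linarith) (by norm_num)

lemma H_bound {d : ℝ} (hd : 0 < d) (hd1 : d < 1) :
    ((1 - Real.log d) + psiW (1 - d)) * (d * (1 - Real.log d) ^ 3)⁻¹ ≤
      3 * (psiW d + psiW (1 - d)) := by
  have hM := one_le_M hd hd1
  have hu : 0 < 1 - d := by linarith
  have hMu := one_le_M hu (by linarith)
  have hpu := psiW_nonneg hu
  have hpd := psiW_nonneg hd
  have e1 : (1 - Real.log d) * (d * (1 - Real.log d) ^ 3)⁻¹ = psiW d := by
    unfold psiW; field_simp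
  have e2 : (d * (1 - Real.log d) ^ 3)⁻¹ ≤ psiW d := by
    unfold psiW
    gcongr
    norm_num
  have e0 : 0 ≤ (d * (1 - Real.log d) ^ 3)⁻¹ := by positivity
  rw [add_mul, e1]
  rcases le_total d (1/2) with h | h
  · have : psiW (1 - d) ≤ 2 := by
      unfold psiW
      rw [inv_le_comm₀ (by positivity) (by norm_num)]
      nlinarith
    nlinarith
  · have : (d * (1 - Real.log d) ^ 3)⁻¹ ≤ 2 := by
      rw [inv_le_comm₀ (by positivity) (by norm_num)]
      nlinarith [one_le_pow₀ hM (n := 3)]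
    nlinarith

lemma main_bound {x y : ℝ} (hx : 0 < x) (hxy : x < y) (hy : y < 1) :
    (ampA y * Real.sin (1 / y) - ampA x * Real.sin (1 / x)) ^ 2 * (y - x)⁻¹ *
      (Real.log |Real.log (1 / (y - x))|) ^ 2 ≤
    (24576 ^ 2 * 8 ^ 17 * 3) * (psiW x * (psiW (y - x) + psiW (1 - (y - x)))) := by
  have hd : 0 < y - x := by linarith
  have hd1 : y - x < 1 := by linarith
  have b1 := diff_bound hx hxy hy
  generalize y - x = d at *
  have b2 := min_bound hx (by linarith) hd hd1
  have b3 := W_bound hd hd1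
  have b4 := AL_bound hx (by linarith)
  have b5 := H_bound hd hd1
  have hM := one_le_M hd hd1
  have hpu := psiW_nonneg (by linarith : 0 < 1 - d)
  have hpd := psiW_nonneg hd
  have hpx := psiW_nonneg hx
  have hA : 0 ≤ ampA x := ampA_nonneg
  have hm0 : 0 ≤ min 1 (d / x ^ 2) := le_min (by norm_num) (by positivity)
  have hm1 : min 1 (d / x ^ 2) ≤ 1 := min_le_left _ _
  generalize min 1 (d / x ^ 2) = m at *
  have hsq : (ampA y * Real.sin (1 / y) - ampA x * Real.sin (1 / x)) ^ 2 ≤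
      24576 ^ 2 * ampA x ^ 2 * m := by
    rw [← sq_abs]
    calc _ ≤ (24576 * ampA x * m) ^ 2 := by gcongr
      _ = 24576 ^ 2 * ampA x ^ 2 * m * m := by ring
      _ ≤ _ := mul_le_of_le_one_right (by positivity) hm1
  have hm : m ≤ 8 ^ 9 * (1 + Real.log (2 / x)) ^ 3 * ((1 - Real.log d) ^ 3)⁻¹ := by
    rw [← div_eq_mul_inv, le_div_iff₀ (by positivity)]; exact b2
  calc _ ≤ (24576 ^ 2 * ampA x ^ 2 * (8 ^ 9 * (1 + Real.log (2 / x)) ^ 3 * ((1 - Real.log d) ^ 3)⁻¹))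
        * d⁻¹ * (8 ^ 8 * ((1 - Real.log d) + psiW (1 - d))) := by
        have hL : 0 ≤ 1 + Real.log (2 / x) := by
          linarith [M_le_L hx, one_le_M hx (by linarith)]
        have hsq2 := hsq.trans (mul_le_mul_of_nonneg_left hm (by positivity))
        exact mul_le_mul (mul_le_mul_of_nonneg_right hsq2 (by positivity)) b3
          (by positivity) (by positivity)
    _ = (24576 ^ 2 * 8 ^ 17) * ((ampA x ^ 2 * (1 + Real.log (2 / x)) ^ 3) *
        (((1 - Real.log d) + psiW (1 - d)) * (d * (1 - Real.log d) ^ 3)⁻¹)) := by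
        rw [mul_inv]; ring
    _ ≤ (24576 ^ 2 * 8 ^ 17) * (psiW x * (3 * (psiW d + psiW (1 - d)))) := by
        gcongr
    _ = _ := by ring

lemma psiW_integrable : IntegrableOn psiW (Ioo 0 1) := by
  let φ : ℝ → ℝ := Function.update (fun t => (1 - Real.log t)⁻¹) 0 0
  have hφ : ∀ t, 0 < t → φ =ᶠ[nhds t] fun t => (1 - Real.log t)⁻¹ := fun t ht => by
    filter_upwards [lt_mem_nhds ht] with s hs
    simp [φ, hs.ne']
  have hder : ∀ t ∈ Ioo (0:ℝ) 1, HasDerivAt φ (psiW t) t := fun t ht => by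
    refine HasDerivAt.congr_of_eventuallyEq ?_ (hφ t ht.1)
    have hM := one_le_M ht.1 ht.2
    have := ((Real.hasDerivAt_log ht.1.ne').const_sub 1).fun_inv (by linarith)
    refine this.congr_deriv ?_
    unfold psiW
    rw [mul_inv, neg_neg, div_eq_mul_inv]
  have hc : ContinuousOn φ (Icc 0 1) := by
    intro t ht
    rcases eq_or_lt_of_le ht.1 with h | h
    · subst h
      have : ContinuousWithinAt φ (Ioi 0) 0 := by
        rw [ContinuousWithinAt]
        have hlim : Filter.Tendsto (fun t => (1 - Real.log t)⁻¹) (nhdsWithin 0 (Ioi 0)) (nhds 0) := by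
          apply Filter.Tendsto.inv_tendsto_atTop
          simp only [sub_eq_add_neg]
          exact Filter.tendsto_atTop_add_const_left _ _
            (Filter.tendsto_neg_atBot_atTop.comp Real.tendsto_log_nhdsGT_zero)
        have e0 : φ 0 = 0 := by simp [φ]
        rw [e0]
        refine hlim.congr' ?_
        filter_upwards [self_mem_nhdsWithin] with s hs
        have hs' : s ≠ 0 := ne_of_gt (mem_Ioi.1 hs)
        simp [φ, hs']
      have h2 : ContinuousWithinAt φ (Ici 0) 0 := by
        rw [← Ioi_insert]; exact this.insert
      exact h2.mono Icc_subset_Ici_self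
    · apply ContinuousAt.continuousWithinAt
      refine ContinuousAt.congr ?_ (hφ t h).symm
      apply ContinuousAt.inv₀
      · exact continuousAt_const.sub (Real.continuousAt_log h.ne')
      · have := Real.log_nonpos h.le ht.2
        linarith
  have := intervalIntegral.integrableOn_deriv_of_nonneg hc hder
    (fun t ht => psiW_nonneg ht.1)
  exact this.mono_set Ioo_subset_Ioc_self

noncomputable def FW : ℝ → ENNReal := (Ioo (0:ℝ) 1).indicator (fun t => ENNReal.ofReal (psiW t))

lemma FW_meas : Measurable FW := by
  unfold FW
  refine Measurable.indicator ?_ measurableSet_Ioo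
  unfold psiW
  fun_prop

lemma FW_fin : ∫⁻ t, FW t < ⊤ := by
  unfold FW
  rw [lintegral_indicator measurableSet_Ioo]
  exact psiW_integrable.lintegral_lt_top

noncomputable def KW (z : ℝ) : ENNReal := FW z + FW (1 - z) + (FW (-z) + FW (1 + z))

lemma KW_meas : Measurable KW := by
  have := FW_meas
  unfold KW
  fun_prop

lemma KW_neg (z : ℝ) : KW (-z) = KW z := by
  unfold KW
  rw [neg_neg, sub_neg_eq_add, ← sub_eq_add_neg, add_comm]

lemma KW_fin : ∫⁻ t, KW t < ⊤ := by
  have h := FW_meas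
  unfold KW
  rw [lintegral_add_left (by fun_prop), lintegral_add_left (by fun_prop),
    lintegral_add_left (by fun_prop), lintegral_sub_left_eq_self FW 1,
    lintegral_add_left_eq_self FW 1, lintegral_neg_eq_self FW]
  simp [FW_fin]

lemma conv_fin : ∫⁻ p : ℝ × ℝ, FW p.1 * KW (p.1 - p.2) < ⊤ := by
  have h := FW_meas
  have h' := KW_meas
  rw [Measure.volume_eq_prod, lintegral_prod _ (by fun_prop)]
  have : ∀ x : ℝ, ∫⁻ y, FW x * KW (x - y) = FW x * ∫⁻ t, KW t := fun x => by
    rw [lintegral_const_mul _ (by fun_prop), lintegral_sub_left_eq_self KW x]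
  simp only [this]
  rw [lintegral_mul_const _ h]
  exact ENNReal.mul_lt_top FW_fin KW_fin

lemma conv_fin' : ∫⁻ p : ℝ × ℝ, FW p.2 * KW (p.1 - p.2) < ⊤ := by
  have h := FW_meas
  have h' := KW_meas
  rw [Measure.volume_eq_prod, lintegral_prod_symm _ (by fun_prop)]
  have : ∀ x : ℝ, ∫⁻ y, FW x * KW (y - x) = FW x * ∫⁻ t, KW t := fun x => by
    rw [lintegral_const_mul _ (by fun_prop), lintegral_sub_right_eq_self KW x]
  simp only [this]
  rw [lintegral_mul_const _ h]
  exact ENNReal.mul_lt_top FW_fin KW_fin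

lemma ofReal_bound {x y : ℝ} (hx : 0 < x) (hxy : x < y) (hy : y < 1) :
    ENNReal.ofReal ((24576 ^ 2 * 8 ^ 17 * 3) *
      (psiW x * (psiW (y - x) + psiW (1 - (y - x))))) ≤
    ENNReal.ofReal (24576 ^ 2 * 8 ^ 17 * 3) * (FW x * KW (y - x)) := by
  have hd : 0 < y - x := by linarith
  have hd1 : y - x < 1 := by linarith
  have hpu := psiW_nonneg (by linarith : 0 < 1 - (y - x))
  have hpd := psiW_nonneg hd
  have hpx := psiW_nonneg hx
  have f : ∀ t, 0 < t → t < 1 → FW t = ENNReal.ofReal (psiW t) := fun t h0 h1 => by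
    unfold FW; rw [indicator_of_mem (show t ∈ Ioo (0:ℝ) 1 from ⟨h0, h1⟩)]
  rw [ENNReal.ofReal_mul (by norm_num), ENNReal.ofReal_mul hpx, ENNReal.ofReal_add hpd hpu,
    ← f x hx (by linarith), ← f _ hd hd1, ← f (1 - (y - x)) (by linarith) (by linarith)]
  gcongr
  unfold KW
  exact le_self_add

/-- The double integral
`∫₀¹∫₀¹ [g(x)-g(y)]² |x-y|⁻¹ (log|log(1/|x-y|)|)² dx dy` is finite for
`g(x) = x^{-1/2} (1 + log(2/x))^{-4} sin(1/x)`. -/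
theorem stmt18 (g : ℝ → ℝ)
    (hg : ∀ x, 0 < x → x < 1 →
      g x = (Real.sqrt x)⁻¹ * ((1 + Real.log (2 / x)) ^ 4)⁻¹ * Real.sin (1 / x)) :
    ∫⁻ p in (Set.Ioo (0 : ℝ) 1) ×ˢ (Set.Ioo (0 : ℝ) 1),
        ENNReal.ofReal ((g p.1 - g p.2) ^ 2 * |p.1 - p.2|⁻¹ *
          (Real.log |Real.log (1 / |p.1 - p.2|)|) ^ 2) < ⊤ := by
  have h := FW_meas
  have h' := KW_meas
  have hfin : ∫⁻ p : ℝ × ℝ, ENNReal.ofReal (24576 ^ 2 * 8 ^ 17 * 3) *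
      (FW p.1 * KW (p.1 - p.2) + FW p.2 * KW (p.1 - p.2)) < ⊤ := by
    rw [lintegral_const_mul _ (by fun_prop), lintegral_add_left (by fun_prop)]
    exact ENNReal.mul_lt_top ENNReal.ofReal_lt_top (ENNReal.add_lt_top.2 ⟨conv_fin, conv_fin'⟩)
  refine lt_of_le_of_lt ?_ hfin
  refine le_trans (setLIntegral_mono' (measurableSet_Ioo.prod measurableSet_Ioo) ?_)
    (setLIntegral_le_lintegral _ _)
  rintro ⟨x, y⟩ ⟨⟨hx, hx1⟩, ⟨hy, hy1⟩⟩
  simp only at hx hx1 hy hy1 ⊢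
  have gx : g x = ampA x * Real.sin (1 / x) := hg x hx hx1
  have gy : g y = ampA y * Real.sin (1 / y) := hg y hy hy1
  rw [gx, gy]
  rcases lt_trichotomy x y with hlt | heq | hlt
  · have e : |x - y| = y - x := by rw [abs_sub_comm, abs_of_pos (by linarith)]
    rw [e, sub_sq_comm]
    refine (ENNReal.ofReal_le_ofReal (main_bound hx hlt hy1)).trans
      ((ofReal_bound hx hlt hy1).trans ?_)
    rw [← KW_neg (y - x), neg_sub]
    gcongr
    exact le_self_add
  · subst heq; simp
  · have e : |x - y| = x - y := by rw [abs_of_pos (by linarith)]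
    rw [e]
    refine (ENNReal.ofReal_le_ofReal (main_bound hy hlt hx1)).trans
      ((ofReal_bound hy hlt hx1).trans ?_)
    gcongr
    exact le_add_self
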